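/- For each u ∈ ℂ with |u| ≤ u_c, the power series Z_u(v) := Σ_{q≥0} (Σ_{p≥0} z_{p,q}·u^p)·v^q in v has radius of convergence exactly u_c, admits no analytic continuation to any neighborhood of the point u_c (i.e. u_c is its dominant singularity), and admits an analytic continuation to a slit disk at u_c (whose margin may depend on u). -/

import Mathlib

noncomputable def nuc : ℝ := 1 + 2 * Real.sqrt 7

noncomputable def tc : ℝ := Real.sqrt 10 / (8 * (7 + Real.sqrt 7) ^ ((3:ℝ)/2))

noncomputable def uc : ℝ := (6/5) * (7 + Real.sqrt 7) * tc

/-- The rational parametrization `û` of the `u`-variable. -/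
noncomputable def uhat (H : ℂ) : ℂ :=
  ((uc : ℂ) / 3) * H * (10 - 12 * H + 6 * H ^ 2 - H ^ 3)

/-- The rational parametrization `Ẑ₀`. -/
noncomputable def Z0hat (H : ℂ) : ℂ :=
  (1/10) * (1 - (1 - (Real.sqrt 7 : ℂ)) * H + 3 * H ^ 2 - H ^ 3)
    * (10 - 12 * H + 6 * H ^ 2 - H ^ 3)

/-- The rational parametrization `Ẑ₁`. -/
noncomputable def Z1hat (H : ℂ) : ℂ :=
  (3 / (10 * (uc : ℂ))) *
    ((Real.sqrt 7 : ℂ) - 1 + H - 3 * (4 - 3 * H + H ^ 2) / (10 - 12 * H + 6 * H ^ 2 - H ^ 3))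

/-- The rational parametrization `Â`. -/
noncomputable def Ahat (H : ℂ) : ℂ :=
  (1/10) * ((((3:ℝ)/2) ^ ((7:ℝ)/3) : ℝ) : ℂ) * (9 - 8 * H + 3 * H ^ 2) / (3 - 3 * H + H ^ 2) ^ 2

/-- The slit disk at `x > 0` of margin `ε > 0`. -/
def slitDisk (x ε : ℝ) : Set ℂ :=
  Metric.ball (0 : ℂ) (x + ε) \ (Complex.ofReal '' Set.Icc x (x + ε))

/-!
Put `u = û(1 - w)` and `v = û(1 - x)`. Then `1 - u / u_c = w³(2 + w)/3`, and the functional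
equation solves to a rational function `Zparam w x`: the kernel and the right-hand side share a
factor, which cancels and leaves a denominator cubic in `x`.

The coordinate `w` is an analytic function of `u` on the disk `|u - u_c| < 3 u_c` slit along
`[u_c, 4 u_c)`: the inverse branch of `w³(2 + w)/3` with values in the right half-plane is the
fixed point of a contraction. It maps the closed disk of radius `u_c` into the sector
`|arg w| ≤ π/6`, where the denominator of `Zparam` vanishes only at `w = x = 0`. Hence `Zparam`
continues `Z` to the open polydisk and continuously to `|u| = u_c`, and nonnegativity of the
coefficients makes the double series converge to it there.

For fixed `w`, the expansion of `Zparam w x` at `x = 0` is, modulo a linear function of the quartic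
`x³(2 + x)` and terms `O(x⁵)`, a nonzero multiple of `x⁴`; to leading order this is a multiple of
`(1 - v / u_c) ^ (4 / 3)`, which no function analytic at `u_c` can match. The denominator has at
most three zeros in `x`, so a small enough margin keeps them out of the slit disk.
-/

open Filter Metric Topology Asymptotics

/-! ### Power series -/

theorem hasFPowerSeriesAt_ofScalars_of_hasSum {𝕜 : Type*} [NontriviallyNormedField 𝕜]
    {a : ℕ → 𝕜} {F : 𝕜 → 𝕜} (h : ∀ᶠ v in 𝓝 0, HasSum (fun n => a n * v ^ n) (F v)) :
    HasFPowerSeriesAt F (FormalMultilinearSeries.ofScalars 𝕜 a) 0 := by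
  rw [hasFPowerSeriesAt_iff]
  filter_upwards [h] with v hv
  simpa only [FormalMultilinearSeries.coeff_ofScalars, zero_add, smul_eq_mul, mul_comm] using hv

theorem hasSum_pow_of_differentiableOn_ball {a : ℕ → ℂ} {F : ℂ → ℂ} {R : ℝ}
    (hF : DifferentiableOn ℂ F (ball 0 R))
    (h : ∀ᶠ v in 𝓝 0, HasSum (fun n => a n * v ^ n) (F v)) {v : ℂ} (hv : v ∈ ball 0 R) :
    HasSum (fun n => a n * v ^ n) (F v) := by
  rw [mem_ball_zero_iff] at hv
  obtain ⟨r, hvr, hrR⟩ := exists_between hv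
  lift r to NNReal using (norm_nonneg v).trans hvr.le
  have hcauchy : HasFPowerSeriesOnBall F (cauchyPowerSeries F 0 r) 0 r :=
    (hF.mono (closedBall_subset_ball hrR)).hasFPowerSeriesOnBall
      (by exact_mod_cast (norm_nonneg v).trans_lt hvr)
  have hsum := hcauchy.hasSum (y := v) (by simpa [← ofReal_norm] using hvr)
  rw [← (hasFPowerSeriesAt_ofScalars_of_hasSum h).eq_formalMultilinearSeries
    hcauchy.hasFPowerSeriesAt] at hsum
  simpa [FormalMultilinearSeries.apply_eq_pow_smul_coeff, FormalMultilinearSeries.coeff_ofScalars,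
    mul_comm] using hsum

theorem analyticAt_tsum_of_summable {𝕜 : Type*} [NontriviallyNormedField 𝕜] [CompleteSpace 𝕜]
    {a : ℕ → 𝕜} {v y : 𝕜} (h : Summable fun n => a n * v ^ n) (hy : ‖y‖ < ‖v‖) :
    AnalyticAt 𝕜 (fun y => ∑' n, a n * y ^ n) y := by
  set p := FormalMultilinearSeries.ofScalars 𝕜 a
  have hradius : (‖v‖₊ : ENNReal) ≤ p.radius := by
    refine p.le_radius_of_tendsto (l := 0) ?_
    simpa [p, FormalMultilinearSeries.ofScalars_norm] using h.tendsto_atTop_zero.norm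
  have hy_lt : (‖y‖₊ : ENNReal) < p.radius :=
    lt_of_lt_of_le (by exact_mod_cast hy) hradius
  have hsum : p.sum = fun y => ∑' n, a n * y ^ n := by
    funext y
    simp [p, FormalMultilinearSeries.sum, FormalMultilinearSeries.coeff_ofScalars, mul_comm]
  rw [← hsum]
  exact (p.hasFPowerSeriesOnBall (pos_of_gt hy_lt)).analyticAt_of_mem
    (by simpa [enorm_eq_nnnorm] using hy_lt)

/-! ### Double power series with nonnegative coefficients -/

/-- The monomial of bidegree `pq` of the double power series `∑ z p q u ^ p v ^ q`, evaluated
at `(u, v)`. -/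
def doubleTerm (z : ℕ → ℕ → ℝ) (u v : ℂ) (pq : ℕ × ℕ) : ℂ :=
  z pq.1 pq.2 * u ^ pq.1 * v ^ pq.2

section DoubleSeries

variable {z : ℕ → ℕ → ℝ}

theorem doubleTerm_swap (z : ℕ → ℕ → ℝ) (u v : ℂ) :
    doubleTerm (Function.swap z) v u = doubleTerm z u v ∘ Equiv.prodComm ℕ ℕ :=
  funext fun _ => mul_right_comm _ _ _

theorem hasSum_doubleTerm_swap {u v S : ℂ} :
    HasSum (doubleTerm (Function.swap z) v u) S ↔ HasSum (doubleTerm z u v) S := by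
  rw [doubleTerm_swap, Equiv.hasSum_iff]

theorem norm_doubleTerm (hz : ∀ p q, 0 ≤ z p q) (u v : ℂ) (pq : ℕ × ℕ) :
    ‖doubleTerm z u v pq‖ = z pq.1 pq.2 * ‖u‖ ^ pq.1 * ‖v‖ ^ pq.2 := by
  rw [doubleTerm, norm_mul, norm_mul, norm_pow, norm_pow, Complex.norm_real,
    Real.norm_of_nonneg (hz _ _)]

theorem norm_doubleTerm_le (hz : ∀ p q, 0 ≤ z p q) {u u' v v' : ℂ} (hu : ‖u‖ ≤ ‖u'‖)
    (hv : ‖v‖ ≤ ‖v'‖) (pq : ℕ × ℕ) : ‖doubleTerm z u v pq‖ ≤ ‖doubleTerm z u' v' pq‖ := by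
  rw [norm_doubleTerm hz, norm_doubleTerm hz]
  have := hz pq.1 pq.2
  gcongr

theorem summable_doubleTerm_of_norm_le (hz : ∀ p q, 0 ≤ z p q) {u u' v v' : ℂ}
    (h : Summable (doubleTerm z u' v')) (hu : ‖u‖ ≤ ‖u'‖) (hv : ‖v‖ ≤ ‖v'‖) :
    Summable (doubleTerm z u v) :=
  h.norm.of_norm_bounded (norm_doubleTerm_le hz hu hv)

theorem hasSum_tsum_mul_pow_of_hasSum_doubleTerm {u v S : ℂ} (h : HasSum (doubleTerm z u v) S) :
    HasSum (fun q => (∑' p, (z p q : ℂ) * u ^ p) * v ^ q) S := by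
  have hswap := (Equiv.prodComm ℕ ℕ).hasSum_iff.2 h
  refine hswap.prod_fiberwise fun q => ?_
  rw [← tsum_mul_right]
  exact (hswap.summable.prod_factor q).hasSum

theorem summable_column_of_summable_doubleTerm {u v : ℂ} (h : Summable (doubleTerm z u v))
    (hv : v ≠ 0) (q : ℕ) : Summable fun p => (z p q : ℂ) * u ^ p :=
  (summable_mul_right_iff (pow_ne_zero q hv)).1
    (((Equiv.prodComm ℕ ℕ).summable_iff.2 h).prod_factor q)

theorem summable_doubleTerm_of_summable_tsum_mul_pow (hz : ∀ p q, 0 ≤ z p q) {r R : ℝ}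
    (hr : 0 ≤ r) (hR : 0 ≤ R) (hcol : ∀ q, Summable fun p => (z p q : ℂ) * (r : ℂ) ^ p)
    (h : Summable fun q => (∑' p, (z p q : ℂ) * (r : ℂ) ^ p) * (R : ℂ) ^ q) :
    Summable (doubleTerm z r R) := by
  have hcol_real : ∀ q, Summable fun p => z p q * r ^ p := fun q => by
    rw [← Complex.summable_ofReal]
    exact (hcol q).congr fun p => by push_cast; rfl
  have hreal : Summable fun qp : ℕ × ℕ => z qp.2 qp.1 * r ^ qp.2 * R ^ qp.1 := by
    refine (summable_prod_of_nonneg fun qp => ?_).2 ⟨fun q => (hcol_real q).mul_right (R ^ q), ?_⟩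
    · have := hz qp.2 qp.1
      simp only [Pi.zero_apply]
      positivity
    · rw [← Complex.summable_ofReal]
      refine h.congr fun q => ?_
      simp only [tsum_mul_right]
      push_cast
      rfl
  rw [← (Equiv.prodComm ℕ ℕ).summable_iff]
  exact (Complex.summable_ofReal.2 hreal).congr fun qp => by simp [doubleTerm]

theorem hasSum_doubleTerm_of_differentiableOn_right (hz : ∀ p q, 0 ≤ z p q) {F : ℂ → ℂ → ℂ}
    {r R : ℝ} (hF : ∀ u ∈ ball (0 : ℂ) r, DifferentiableOn ℂ (F u) (ball 0 R))
    (hloc : ∀ u ∈ ball (0 : ℂ) r, ∀ᶠ v in 𝓝 0, HasSum (doubleTerm z u v) (F u v))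
    {u v : ℂ} (hu : u ∈ ball 0 r) (hv : v ∈ ball 0 R) :
    HasSum (doubleTerm z u v) (F u v) := by
  have hslice : ∀ u ∈ ball (0 : ℂ) r, ∀ v ∈ ball (0 : ℂ) R,
      HasSum (fun q => (∑' p, (z p q : ℂ) * u ^ p) * v ^ q) (F u v) := fun u hu v hv =>
    hasSum_pow_of_differentiableOn_ball (hF u hu)
      ((hloc u hu).mono fun _ => hasSum_tsum_mul_pow_of_hasSum_doubleTerm) hv
  have hu' : (‖u‖ : ℂ) ∈ ball 0 r := by simpa using hu
  have hv' : (‖v‖ : ℂ) ∈ ball 0 R := by simpa using hv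
  obtain ⟨v₀, hv₀, hv₀_ne⟩ :=
    (((hloc _ hu').filter_mono nhdsWithin_le_nhds).and self_mem_nhdsWithin).exists (f := 𝓝[≠] 0)
  have hnorm : Summable (doubleTerm z ‖u‖ ‖v‖) :=
    summable_doubleTerm_of_summable_tsum_mul_pow hz (norm_nonneg u) (norm_nonneg v)
      (summable_column_of_summable_doubleTerm hv₀.summable hv₀_ne) (hslice _ hu' _ hv').summable
  have hsum := (summable_doubleTerm_of_norm_le hz hnorm (u := u) (v := v)
    (by simp) (by simp)).hasSum
  rwa [(hslice u hu v hv).unique (hasSum_tsum_mul_pow_of_hasSum_doubleTerm hsum)]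

theorem hasSum_doubleTerm_of_differentiableOn (hz : ∀ p q, 0 ≤ z p q) {F : ℂ → ℂ → ℂ} {r R : ℝ}
    (hr : 0 < r) (hright : ∀ u ∈ ball (0 : ℂ) r, DifferentiableOn ℂ (F u) (ball 0 R))
    (hleft : ∀ v ∈ ball (0 : ℂ) R, DifferentiableOn ℂ (F · v) (ball 0 r))
    (hloc : ∀ᶠ u in 𝓝 0, ∀ᶠ v in 𝓝 0, HasSum (doubleTerm z u v) (F u v))
    {u v : ℂ} (hu : u ∈ ball 0 r) (hv : v ∈ ball 0 R) :
    HasSum (doubleTerm z u v) (F u v) := by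
  obtain ⟨δ, hδ, hδloc⟩ := Metric.eventually_nhds_iff_ball.1
    (hloc.and (ball_mem_nhds (0 : ℂ) hr))
  have hthin : ∀ u ∈ ball (0 : ℂ) δ, ∀ v ∈ ball (0 : ℂ) R, HasSum (doubleTerm z u v) (F u v) :=
    fun u hu v hv => hasSum_doubleTerm_of_differentiableOn_right hz
      (fun u hu => hright u (hδloc u hu).2) (fun u hu => (hδloc u hu).1) hu hv
  rw [← hasSum_doubleTerm_swap]
  refine hasSum_doubleTerm_of_differentiableOn_right (F := fun v u => F u v)
    (fun p q => hz q p) hleft (fun v hv => ?_) hv hu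
  filter_upwards [ball_mem_nhds (0 : ℂ) hδ] with u hu
  exact hasSum_doubleTerm_swap.2 (hthin u hu v hv)

theorem summable_doubleTerm_of_continuousOn (hz : ∀ p q, 0 ≤ z p q) {F : ℂ → ℂ} {r : ℝ}
    (hr : 0 < r) {R : ℝ} (hR : 0 ≤ R) (hF : ContinuousOn F (closedBall 0 r))
    (h : ∀ u ∈ ball (0 : ℂ) r, HasSum (doubleTerm z u R) (F u)) :
    Summable (doubleTerm z r R) := by
  have hIco : closure (Set.Ico 0 r) = Set.Icc 0 r := closure_Ico hr.ne
  refine Summable.of_norm (summable_of_sum_le (c := ‖F r‖) (fun _ => norm_nonneg _) fun s => ?_)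
  refine le_on_closure (s := Set.Ico 0 r) (x := r)
    (f := fun t : ℝ => ∑ pq ∈ s, ‖doubleTerm z t R pq‖) (g := fun t : ℝ => ‖F t‖)
    (fun t ht => ?_) ?_ ?_ (by simp [hIco, hr.le])
  · have hnorm : ∀ pq, ‖doubleTerm z t R pq‖ = (doubleTerm z t R pq).re := fun pq => by
      rw [norm_doubleTerm hz, Complex.norm_of_nonneg ht.1, Complex.norm_of_nonneg hR, doubleTerm]
      exact_mod_cast rfl
    have hsum := Complex.hasSum_re (h t (by simpa [abs_of_nonneg ht.1] using ht.2))
    simp only [← hnorm] at hsum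
    exact (sum_le_hasSum s (fun _ _ => norm_nonneg _) hsum).trans (Complex.re_le_norm _)
  · unfold doubleTerm
    fun_prop
  · rw [hIco]
    refine (hF.comp Complex.continuous_ofReal.continuousOn fun t ht => ?_).norm
    simpa [abs_of_nonneg ht.1] using ht.2

theorem hasSum_doubleTerm_of_continuousOn (hz : ∀ p q, 0 ≤ z p q) {F : ℂ → ℂ → ℂ} {r R : ℝ}
    (hr : 0 < r) (hF : ∀ v ∈ ball (0 : ℂ) R, ContinuousOn (F · v) (closedBall 0 r))
    (h : ∀ u ∈ ball (0 : ℂ) r, ∀ v ∈ ball (0 : ℂ) R, HasSum (doubleTerm z u v) (F u v))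
    {u v : ℂ} (hu : u ∈ closedBall 0 r) (hv : v ∈ ball 0 R) :
    HasSum (doubleTerm z u v) (F u v) := by
  have hv' : (‖v‖ : ℂ) ∈ ball 0 R := by simpa using hv
  have hdom : Summable (doubleTerm z r ‖v‖) := summable_doubleTerm_of_continuousOn hz hr
    (norm_nonneg v) (hF _ hv') fun u hu => h u hu _ hv'
  have hle : ∀ u ∈ closedBall (0 : ℂ) r, ∀ pq, ‖doubleTerm z u v pq‖ ≤ ‖doubleTerm z r ‖v‖ pq‖ :=
    fun u hu => norm_doubleTerm_le hz (by simpa [abs_of_pos hr] using hu) (by simp)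
  have hcont : ContinuousOn (fun u => ∑' pq, doubleTerm z u v pq) (closedBall 0 r) :=
    continuousOn_tsum (fun pq => by unfold doubleTerm; fun_prop) hdom.norm
      fun pq u hu => hle u hu pq
  have hclosure : closure (ball (0 : ℂ) r) = closedBall 0 r := closure_ball 0 hr.ne'
  have heq : Set.EqOn (fun u => ∑' pq, doubleTerm z u v pq) (F · v) (closedBall 0 r) :=
    Set.EqOn.of_subset_closure (fun u hu => (h u hu v hv).tsum_eq) hcont (hF v hv)
      ball_subset_closedBall hclosure.ge
  exact (hdom.norm.of_norm_bounded (hle u hu)).hasSum_iff.2 (heq hu)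

end DoubleSeries

/-! ### The inverse branch of `w ↦ w ^ 3 * (2 + w) / 3` on a slit disk -/

/-- The polynomial `w³(2 + w)/3`: with `w = 1 - H`, one has `û(H) = u_c (1 - quartic w)`. -/
noncomputable def quartic (w : ℂ) : ℂ :=
  w ^ 3 * (2 + w) / 3

/-- The map whose fixed points in the right half-plane are the solutions `w` of
`quartic w = ζ` on the branch given by the principal cube root. -/
noncomputable def quarticInvStep (ζ w : ℂ) : ℂ :=
  Complex.exp ((Complex.log ζ - Complex.log ((2 + w) / 3)) / 3)

theorem re_two_add_div_three_pos {w : ℂ} (hw : 0 ≤ w.re) : 0 < ((2 + w) / 3).re := by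
  rw [show (3 : ℂ) = ((3 : ℝ) : ℂ) by norm_num, Complex.div_ofReal_re, Complex.add_re,
    Complex.re_ofNat]
  positivity

theorem two_add_div_three_mem_slitPlane {w : ℂ} (hw : 0 ≤ w.re) :
    (2 + w) / 3 ∈ Complex.slitPlane :=
  .inl (re_two_add_div_three_pos hw)

theorem two_le_norm_two_add {w : ℂ} (hw : 0 ≤ w.re) : 2 ≤ ‖2 + w‖ := by
  refine le_trans ?_ (Complex.re_le_norm _)
  simpa using hw

theorem quarticInvStep_pow_three_mul {ζ w : ℂ} (hζ : ζ ≠ 0) (hw : 0 ≤ w.re) :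
    quarticInvStep ζ w ^ 3 * ((2 + w) / 3) = ζ := by
  have h2 := Complex.slitPlane_ne_zero (two_add_div_three_mem_slitPlane hw)
  rw [quarticInvStep, ← Complex.exp_nat_mul, Nat.cast_ofNat, mul_div_cancel₀ _ three_ne_zero,
    Complex.exp_sub, Complex.exp_log hζ, Complex.exp_log h2, div_mul_cancel₀ _ h2]

theorem norm_pow_three_le_of_mul_eq {ζ w y : ℂ} (hw : 0 ≤ w.re)
    (h : y ^ 3 * ((2 + w) / 3) = ζ) : ‖y‖ ^ 3 ≤ 3 / 2 * ‖ζ‖ := by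
  have hnorm := congrArg norm h
  rw [norm_mul, norm_pow, norm_div, Complex.norm_ofNat] at hnorm
  nlinarith [two_le_norm_two_add hw, pow_nonneg (norm_nonneg y) 3]

theorem quarticInvStep_exponent_im (ζ w : ℂ) :
    ((Complex.log ζ - Complex.log ((2 + w) / 3)) / 3).im
      = (ζ.arg - ((2 + w) / 3).arg) / 3 := by
  rw [show ((Complex.log ζ - Complex.log ((2 + w) / 3)) / 3).im
      = ((Complex.log ζ - Complex.log ((2 + w) / 3)) / (3 : ℝ)).im by norm_num,
    Complex.div_ofReal_im, Complex.sub_im, Complex.log_im, Complex.log_im]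

theorem abs_quarticInvStep_exponent_im_lt {ζ w : ℂ} (hζ : ζ ∈ Complex.slitPlane)
    (hw : 0 ≤ w.re) :
    |((Complex.log ζ - Complex.log ((2 + w) / 3)) / 3).im| < Real.pi / 2 := by
  rw [quarticInvStep_exponent_im]
  have h2 := abs_lt.1 (Complex.abs_arg_lt_pi_div_two_iff.2 (.inl (re_two_add_div_three_pos hw)))
  have hζ_lower := Complex.neg_pi_lt_arg ζ
  have hζ_upper := (Complex.arg_le_pi ζ).lt_of_ne (Complex.mem_slitPlane_iff_arg.1 hζ).1
  rw [abs_lt]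
  constructor <;> linarith

theorem quarticInvStep_re_pos {ζ w : ℂ} (hζ : ζ ∈ Complex.slitPlane) (hw : 0 ≤ w.re) :
    0 < (quarticInvStep ζ w).re := by
  rw [quarticInvStep, Complex.exp_re]
  exact mul_pos (Real.exp_pos _)
    (Real.cos_pos_of_mem_Ioo (abs_lt.1 (abs_quarticInvStep_exponent_im_lt hζ hw)))

theorem arg_quarticInvStep {ζ w : ℂ} (hζ : ζ ∈ Complex.slitPlane) (hw : 0 ≤ w.re) :
    (quarticInvStep ζ w).arg = (ζ.arg - ((2 + w) / 3).arg) / 3 := by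
  have him := abs_lt.1 (abs_quarticInvStep_exponent_im_lt hζ hw)
  rw [quarticInvStep, ← Complex.log_im, Complex.log_exp (by linarith [Real.pi_pos])
    (by linarith [Real.pi_pos]), quarticInvStep_exponent_im]

theorem hasDerivAt_quarticInvStep (ζ : ℂ) {w : ℂ} (hw : 0 ≤ w.re) :
    HasDerivAt (quarticInvStep ζ) (-quarticInvStep ζ w / (3 * (2 + w))) w := by
  have h2 : 2 + w ≠ 0 := norm_pos_iff.1 (two_pos.trans_le (two_le_norm_two_add hw))
  have h : HasDerivAt (fun w : ℂ => (2 + w) / 3) (1 / 3) w :=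
    ((hasDerivAt_id w).const_add 2).div_const 3
  refine (((h.clog (two_add_div_three_mem_slitPlane hw)).const_sub _).div_const 3).cexp.congr_deriv
    ?_
  rw [quarticInvStep]
  field_simp

/-- The slit disk `{ζ | ‖ζ‖ < 3} \ (-3, 0]` on which `quartic` has an inverse branch. -/
def branchDomain : Set ℂ := Complex.slitPlane ∩ ball 0 3

theorem isOpen_branchDomain : IsOpen branchDomain :=
  Complex.isOpen_slitPlane.inter isOpen_ball

theorem ne_zero_of_mem_branchDomain {ζ : ℂ} (hζ : ζ ∈ branchDomain) : ζ ≠ 0 :=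
  Complex.slitPlane_ne_zero hζ.1

theorem norm_quarticInvStep_le {ζ w : ℂ} (hζ : ζ ∈ branchDomain) (hw : 0 ≤ w.re) :
    ‖quarticInvStep ζ w‖ ≤ 2 := by
  have hcube := norm_pow_three_le_of_mul_eq hw
    (quarticInvStep_pow_three_mul (ne_zero_of_mem_branchDomain hζ) hw)
  refine le_of_pow_le_pow_left₀ three_ne_zero zero_le_two (hcube.trans ?_)
  linarith [mem_ball_zero_iff.1 hζ.2]

theorem norm_quarticInvStep_sub_le {ζ w x : ℂ} (hζ : ζ ∈ branchDomain) (hw : 0 ≤ w.re)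
    (hx : 0 ≤ x.re) : ‖quarticInvStep ζ w - quarticInvStep ζ x‖ ≤ 1 / 2 * ‖w - x‖ := by
  refine (convex_halfSpace_re_ge 0).norm_image_sub_le_of_norm_hasDerivWithin_le
    (f := quarticInvStep ζ) (s := {y : ℂ | 0 ≤ y.re})
    (fun y hy => (hasDerivAt_quarticInvStep ζ hy).hasDerivWithinAt) (fun y hy => ?_) hx hw
  have h2 := two_le_norm_two_add hy
  rw [norm_div, norm_neg, norm_mul, Complex.norm_ofNat, div_le_iff₀ (by positivity)]
  linarith [norm_quarticInvStep_le hζ hy]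

theorem exists_quarticInvStep_eq {ζ : ℂ} (hζ : ζ ∈ branchDomain) :
    ∃ w : ℂ, 0 ≤ w.re ∧ quarticInvStep ζ w = w := by
  have hmaps : Set.MapsTo (quarticInvStep ζ) {w | 0 ≤ w.re} {w | 0 ≤ w.re} :=
    fun w hw => (quarticInvStep_re_pos hζ.1 hw).le
  have hclosed : IsClosed {w : ℂ | 0 ≤ w.re} :=
    isClosed_le continuous_const Complex.continuous_re
  have hcontr : ContractingWith (1 / 2) (hmaps.restrict (quarticInvStep ζ) _ _) := by
    refine ⟨by norm_num, LipschitzWith.of_dist_le_mul fun x y => ?_⟩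
    rw [Subtype.dist_eq, Subtype.dist_eq, dist_eq_norm, dist_eq_norm]
    simpa using norm_quarticInvStep_sub_le hζ x.2 y.2
  obtain ⟨w, hw, hfix, -⟩ := hcontr.exists_fixedPoint' hclosed.isComplete hmaps
    (x := 0) (by simp) (edist_ne_top _ _)
  exact ⟨w, hw, hfix⟩

open Classical in
/-- The inverse branch of `quartic` on `branchDomain` that takes values in the right half-plane;
it is set to `0` outside `branchDomain`, which makes it continuous at the branch point `0`. -/
noncomputable def quarticInv (ζ : ℂ) : ℂ :=
  if h : ζ ∈ branchDomain then (exists_quarticInvStep_eq h).choose else 0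

theorem quarticInv_zero : quarticInv 0 = 0 :=
  dif_neg fun h => ne_zero_of_mem_branchDomain h rfl

theorem quarticInv_re_nonneg (ζ : ℂ) : 0 ≤ (quarticInv ζ).re := by
  by_cases h : ζ ∈ branchDomain
  · rw [quarticInv, dif_pos h]
    exact (exists_quarticInvStep_eq h).choose_spec.1
  · rw [quarticInv, dif_neg h, Complex.zero_re]

theorem quarticInvStep_quarticInv {ζ : ℂ} (hζ : ζ ∈ branchDomain) :
    quarticInvStep ζ (quarticInv ζ) = quarticInv ζ := by
  rw [quarticInv, dif_pos hζ]
  exact (exists_quarticInvStep_eq hζ).choose_spec.2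

theorem quartic_quarticInv {ζ : ℂ} (hζ : ζ ∈ insert 0 branchDomain) :
    quartic (quarticInv ζ) = ζ := by
  rcases hζ with rfl | hζ
  · simp [quartic, quarticInv_zero]
  · have h := quarticInvStep_pow_three_mul (ne_zero_of_mem_branchDomain hζ)
      (quarticInv_re_nonneg ζ)
    rwa [quarticInvStep_quarticInv hζ, ← mul_div_assoc] at h

theorem quarticInv_ne_zero {ζ : ℂ} (hζ : ζ ∈ branchDomain) : quarticInv ζ ≠ 0 := fun h =>
  ne_zero_of_mem_branchDomain hζ <| by
    rw [← quartic_quarticInv (.inr hζ), h, quartic]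
    ring

theorem norm_quarticInv_pow_three_le {ζ : ℂ} (hζ : ζ ∈ insert 0 branchDomain) :
    ‖quarticInv ζ‖ ^ 3 ≤ 3 / 2 * ‖ζ‖ :=
  norm_pow_three_le_of_mul_eq (quarticInv_re_nonneg ζ)
    ((mul_div_assoc _ _ _).symm.trans (quartic_quarticInv hζ))

theorem abs_arg_quarticInv_le {ζ : ℂ} (hζ : ζ ∈ insert 0 branchDomain) :
    |(quarticInv ζ).arg| ≤ |ζ.arg| / 3 := by
  rcases hζ with rfl | hζ
  · simp [quarticInv_zero]
  have hre := quarticInv_re_nonneg ζ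
  have harg := arg_quarticInvStep hζ.1 hre
  rw [quarticInvStep_quarticInv hζ] at harg
  set w := quarticInv ζ
  have him : ((2 + w) / 3).im = w.im / 3 := by
    rw [show (2 + w) / 3 = (2 + w) / (3 : ℝ) by norm_num, Complex.div_ofReal_im]
    simp
  -- `w` and `(2 + w) / 3` lie on the same side of the real axis, so their arguments do not
  -- compensate in `arg ζ = 3 arg w + arg ((2 + w) / 3)`.
  rcases le_or_gt 0 w.im with hw | hw
  · have h1 := Complex.arg_nonneg_iff.2 hw
    have h2 := Complex.arg_nonneg_iff.2 (him.symm ▸ (by positivity) : 0 ≤ ((2 + w) / 3).im)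
    rw [abs_of_nonneg h1, abs_of_nonneg] <;> linarith
  · have h1 := Complex.arg_neg_iff.2 hw
    have h2 := Complex.arg_neg_iff.2 (by rw [him]; linarith : ((2 + w) / 3).im < 0)
    rw [abs_of_neg h1, abs_of_neg] <;> linarith

theorem continuousAt_quarticInv {ζ : ℂ} (hζ : ζ ∈ branchDomain) : ContinuousAt quarticInv ζ := by
  have hstep : ContinuousAt (fun ξ => quarticInvStep ξ (quarticInv ζ)) ζ :=
    (((continuousAt_id.clog hζ.1).sub continuousAt_const).div_const 3).cexp
  have hlim : Tendsto (fun ξ => 2 * ‖quarticInvStep ξ (quarticInv ζ) - quarticInv ζ‖)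
      (𝓝 ζ) (𝓝 0) := by
    have := (hstep.sub (continuousAt_const (y := quarticInv ζ))).norm.const_mul 2
    simpa [ContinuousAt, quarticInvStep_quarticInv hζ] using this
  rw [ContinuousAt, tendsto_iff_norm_sub_tendsto_zero]
  refine squeeze_zero' (.of_forall fun _ => norm_nonneg _) ?_ hlim
  filter_upwards [isOpen_branchDomain.mem_nhds hζ] with ξ hξ
  have hcontr := norm_quarticInvStep_sub_le hξ (quarticInv_re_nonneg ξ) (quarticInv_re_nonneg ζ)
  rw [quarticInvStep_quarticInv hξ] at hcontr
  have htri := norm_sub_le_norm_sub_add_norm_sub (quarticInv ξ)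
    (quarticInvStep ξ (quarticInv ζ)) (quarticInv ζ)
  linarith

theorem hasDerivAt_quartic (w : ℂ) : HasDerivAt quartic (2 * w ^ 2 * (3 + 2 * w) / 3) w := by
  refine ((((hasDerivAt_id w).pow 3).mul ((hasDerivAt_id w).const_add 2)).div_const 3).congr_deriv
    ?_
  simp
  ring

theorem differentiableAt_quarticInv {ζ : ℂ} (hζ : ζ ∈ branchDomain) :
    DifferentiableAt ℂ quarticInv ζ := by
  have hne : 3 + 2 * quarticInv ζ ≠ 0 := fun h => by
    have := congrArg Complex.re h
    simp at this
    linarith [quarticInv_re_nonneg ζ]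
  refine (HasDerivAt.of_local_left_inverse (continuousAt_quarticInv hζ) (hasDerivAt_quartic _)
    (by simp [quarticInv_ne_zero hζ, hne]) ?_).differentiableAt
  filter_upwards [isOpen_branchDomain.mem_nhds hζ] with ξ hξ
  exact quartic_quarticInv (.inr hξ)

theorem continuousOn_quarticInv : ContinuousOn quarticInv (insert 0 branchDomain) := by
  rintro ζ (rfl | hζ)
  · rw [ContinuousWithinAt, quarticInv_zero, Metric.tendsto_nhdsWithin_nhds]
    intro ε hε
    refine ⟨2 / 3 * ε ^ 3, by positivity, fun ξ hξ hdist => ?_⟩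
    rw [dist_zero_right] at hdist ⊢
    refine lt_of_pow_lt_pow_left₀ 3 hε.le ((norm_quarticInv_pow_three_le hξ).trans_lt ?_)
    linarith
  · exact (continuousAt_quarticInv hζ).continuousWithinAt

/-! ### The rational parametrization in the coordinates `w = 1 - H`, `x = 1 - K` -/

/-- The cubic cofactor of `û`: `û(1 - w) = u_c / 3 * (1 - w) * uhatCofactor w`. -/
def uhatCofactor (w : ℂ) : ℂ :=
  3 + 3 * w + 3 * w ^ 2 + w ^ 3

/-- The nonconstant factor of the denominator of the parametrization of `Z`. -/
def Zdenom (w x : ℂ) : ℂ :=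
  w + x + w ^ 2 + w * x + x ^ 2 + w ^ 3 + w ^ 2 * x + w * x ^ 2 + x ^ 3 + w ^ 2 * x ^ 2

/-- The rational parametrization of `Z`: `Z(û(1 - w), û(1 - x)) = Zparam w x`. -/
noncomputable def Zparam (w x : ℂ) : ℂ :=
  Z0hat (1 - w) + Z0hat (1 - x)
    - uhatCofactor w * uhatCofactor x * (w + x - w * x) / (10 * Zdenom w x)

/-- The factor common to both sides of the functional equation for `Z`, written in the
variables `H = 1 - w` and `K = 1 - x`. -/
def kernelFactor (w x : ℂ) : ℂ :=
  (1 - w) * (1 - x) ^ 2 - (3 * (1 - w) - 1) * (1 - x) + (1 - w) ^ 2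

theorem tc_pos : 0 < tc := by
  rw [tc]
  positivity

theorem uc_pos : 0 < uc := by
  rw [uc]
  have := tc_pos
  positivity

theorem tc_sq_mul : tc ^ 2 * (64 * (7 + Real.sqrt 7) ^ 3) = 10 := by
  have h7 : 0 < 7 + Real.sqrt 7 := by positivity
  have hpow : ((7 + Real.sqrt 7) ^ ((3 : ℝ) / 2)) ^ 2 = (7 + Real.sqrt 7) ^ 3 := by
    rw [← Real.rpow_natCast, ← Real.rpow_mul h7.le, ← Real.rpow_natCast]
    norm_num
  rw [tc, div_pow, mul_pow, hpow, Real.sq_sqrt (by norm_num)]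
  field_simp
  norm_num

theorem ofReal_uc_ne_zero : (uc : ℂ) ≠ 0 :=
  Complex.ofReal_ne_zero.2 uc_pos.ne'

theorem ofReal_sqrt_seven_sq : (Real.sqrt 7 : ℂ) ^ 2 = 7 := by
  exact_mod_cast Real.sq_sqrt (by norm_num : (0 : ℝ) ≤ 7)

theorem ofReal_nuc : (nuc : ℂ) = 1 + 2 * Real.sqrt 7 := by
  rw [nuc]
  push_cast
  rfl

theorem ofReal_uc : (uc : ℂ) = 6 / 5 * (7 + Real.sqrt 7) * tc := by
  rw [uc]
  push_cast
  rfl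

theorem nuc_sq_sub_one_mul_tc : ((nuc : ℂ) ^ 2 - 1) * tc = 10 / 3 * uc := by
  rw [ofReal_nuc, ofReal_uc]
  linear_combination 4 * (tc : ℂ) * ofReal_sqrt_seven_sq

theorem nuc_sq_sub_one_mul_uc_sq : ((nuc : ℂ) ^ 2 - 1) * uc ^ 2 = 9 / 10 := by
  have htc : (tc : ℂ) ^ 2 * (64 * (7 + Real.sqrt 7) ^ 3) = 10 := by exact_mod_cast tc_sq_mul
  rw [ofReal_nuc, ofReal_uc]
  linear_combination 9 / 100 * htc
    + 4 * (6 / 5 * (7 + Real.sqrt 7) * (tc : ℂ)) ^ 2 * ofReal_sqrt_seven_sq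

theorem uhat_one_sub (w : ℂ) : uhat (1 - w) = uc / 3 * (1 - w) * uhatCofactor w := by
  rw [uhat, uhatCofactor]
  ring

theorem uhat_one_sub_eq_quartic (w : ℂ) : uhat (1 - w) = uc * (1 - quartic w) := by
  rw [uhat, quartic]
  ring

theorem Z0hat_one_sub (w : ℂ) :
    Z0hat (1 - w) = uhatCofactor w
      * (w ^ 3 - (2 + (Real.sqrt 7 : ℂ)) * w + 2 + (Real.sqrt 7 : ℂ)) / 10 := by
  rw [Z0hat, uhatCofactor]
  ring

theorem uhat_mul_Z1hat_one_sub {x : ℂ} (hx : uhatCofactor x ≠ 0) :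
    uhat (1 - x) * Z1hat (1 - x)
      = (1 - x) / 10 * (uhatCofactor x * (Real.sqrt 7 - x) - 3 * (2 + x + x ^ 2)) := by
  rw [uhat_one_sub, Z1hat, show 10 - 12 * (1 - x) + 6 * (1 - x) ^ 2 - (1 - x) ^ 3
    = uhatCofactor x by rw [uhatCofactor]; ring]
  have := ofReal_uc_ne_zero
  field_simp
  ring

theorem kernel_eq {w x : ℂ} (hx : uhatCofactor x ≠ 0) :
    nuc * uhat (1 - x) * uhat (1 - w) - uhat (1 - w) ^ 2
        - ((nuc : ℂ) ^ 2 - 1) * tc * uhat (1 - x) * (Z0hat (1 - w) + uhat (1 - w) * Z1hat (1 - x))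
      = -(uc ^ 2 / 9) * uhatCofactor w * kernelFactor w x * Zdenom w x := by
  calc _ = nuc * uhat (1 - x) * uhat (1 - w) - uhat (1 - w) ^ 2
        - 10 / 3 * uc * (uhat (1 - x) * Z0hat (1 - w)
          + uhat (1 - w) * (uhat (1 - x) * Z1hat (1 - x))) := by
        rw [nuc_sq_sub_one_mul_tc]
        ring
    _ = _ := by
        rw [uhat_mul_Z1hat_one_sub hx, uhat_one_sub, uhat_one_sub, Z0hat_one_sub, ofReal_nuc]
        simp only [kernelFactor, Zdenom, uhatCofactor]
        ring

theorem functional_equation_constant_term_eq (w x : ℂ) :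
    nuc * uhat (1 - w) * uhat (1 - x) * Z0hat (1 - w)
        - ((nuc : ℂ) ^ 2 - 1) * tc * uhat (1 - x) * Z0hat (1 - w) ^ 2
        - uhat (1 - w) ^ 2 * Z0hat (1 - x)
        - ((nuc : ℂ) ^ 2 - 1) * uhat (1 - w) ^ 3 * uhat (1 - x)
      = -(uc ^ 2 / 90) * uhatCofactor w ^ 2 * uhatCofactor x * (w + x - w * x)
        * kernelFactor w x := by
  have hcube : ((nuc : ℂ) ^ 2 - 1) * uhat (1 - w) ^ 3 * uhat (1 - x)
      = uc ^ 2 / 90 * ((1 - w) * uhatCofactor w) ^ 3 * ((1 - x) * uhatCofactor x) := by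
    rw [uhat_one_sub, uhat_one_sub]
    linear_combination uc ^ 2 / 81 * ((1 - w) * uhatCofactor w) ^ 3
      * ((1 - x) * uhatCofactor x) * nuc_sq_sub_one_mul_uc_sq
  rw [hcube, nuc_sq_sub_one_mul_tc, uhat_one_sub, uhat_one_sub, Z0hat_one_sub, Z0hat_one_sub,
    ofReal_nuc]
  simp only [kernelFactor, uhatCofactor]
  linear_combination uc ^ 2 / 90 * ((1 - w) * (3 + 3 * w + 3 * w ^ 2 + w ^ 3)) ^ 2
    * ((1 - x) * (3 + 3 * x + 3 * x ^ 2 + x ^ 3)) * ofReal_sqrt_seven_sq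

theorem eq_Zparam_of_functional_equation {w x Z : ℂ} (hw : uhatCofactor w ≠ 0)
    (hx : uhatCofactor x ≠ 0) (hD : Zdenom w x ≠ 0) (hkernel : kernelFactor w x ≠ 0)
    (h : (nuc * uhat (1 - x) * uhat (1 - w) - uhat (1 - w) ^ 2
          - ((nuc : ℂ) ^ 2 - 1) * tc * uhat (1 - x)
            * (Z0hat (1 - w) + uhat (1 - w) * Z1hat (1 - x))) * (Z - Z0hat (1 - x))
        = uhat (1 - w) ^ 2 * (Z0hat (1 - x) - Z0hat (1 - w))
          + ((nuc : ℂ) ^ 2 - 1) * uhat (1 - w) * uhat (1 - x)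
            * (uhat (1 - w) ^ 2 - tc * Z0hat (1 - w) * Z1hat (1 - x))) :
    Z = Zparam w x := by
  -- In terms of `Z₀(u) + Z₀(v) - Z`, the functional equation no longer involves `Z₁(v)` on the
  -- right-hand side, and its kernel and its right-hand side share the factor `kernelFactor w x`.
  have hY : -(uc ^ 2 / 9) * uhatCofactor w * kernelFactor w x * Zdenom w x
        * (Z0hat (1 - w) + Z0hat (1 - x) - Z)
      = -(uc ^ 2 / 90) * uhatCofactor w ^ 2 * uhatCofactor x * (w + x - w * x)
        * kernelFactor w x := by
    rw [← kernel_eq hx, ← functional_equation_constant_term_eq]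
    linear_combination -h
  have hfactor : uc ^ 2 * uhatCofactor w * kernelFactor w x
      * (10 * Zdenom w x * (Z0hat (1 - w) + Z0hat (1 - x) - Z)
        - uhatCofactor w * uhatCofactor x * (w + x - w * x)) = 0 := by
    linear_combination -90 * hY
  have hcleared := (mul_eq_zero.1 hfactor).resolve_left (by simp [uc_pos.ne', hw, hkernel])
  rw [Zparam]
  field_simp
  linear_combination -hcleared

theorem Zparam_comm (w x : ℂ) : Zparam w x = Zparam x w := by
  have hD : Zdenom w x = Zdenom x w := by
    simp only [Zdenom]
    ring
  rw [Zparam, Zparam, hD]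
  ring

theorem Zparam_one_right {w : ℂ} (hw : uhatCofactor w ≠ 0) : Zparam w 1 = Z0hat (1 - w) := by
  have hD : Zdenom w 1 = uhatCofactor w := by
    simp only [Zdenom, uhatCofactor]
    ring
  rw [Zparam, hD, Z0hat_one_sub 1]
  field_simp
  simp only [uhatCofactor]
  ring

theorem differentiable_Z0hat : Differentiable ℂ Z0hat := by
  unfold Z0hat
  fun_prop

theorem differentiable_uhatCofactor : Differentiable ℂ uhatCofactor := by
  unfold uhatCofactor
  fun_prop

theorem differentiableAt_Zparam {w x : ℂ} (hD : Zdenom w x ≠ 0) :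
    DifferentiableAt ℂ (fun y : ℂ × ℂ => Zparam y.1 y.2) (w, x) := by
  have hZ0hat := differentiable_Z0hat
  have hcofactor := differentiable_uhatCofactor
  have hdenom : DifferentiableAt ℂ (fun y : ℂ × ℂ => (10 * Zdenom y.1 y.2)⁻¹) (w, x) := by
    refine DifferentiableAt.fun_inv ?_ (mul_ne_zero (by norm_num) hD)
    unfold Zdenom
    fun_prop
  simp only [Zparam, div_eq_mul_inv]
  fun_prop

/-! ### The sector containing the values of the coordinate -/

theorem re_pow_mul_pow (w x : ℂ) (a b : ℕ) :
    (w ^ a * x ^ b).re = ‖w‖ ^ a * ‖x‖ ^ b * Real.cos (a * w.arg + b * x.arg) := by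
  have hpolar : w ^ a * x ^ b = (‖w‖ ^ a * ‖x‖ ^ b : ℝ)
      * Complex.exp ((a * w.arg + b * x.arg : ℝ) * Complex.I) := by
    conv_lhs => rw [← Complex.norm_mul_exp_arg_mul_I w, ← Complex.norm_mul_exp_arg_mul_I x]
    rw [mul_pow, mul_pow, ← Complex.exp_nat_mul, ← Complex.exp_nat_mul]
    push_cast
    rw [add_mul, Complex.exp_add]
    ring_nf
  rw [hpolar, Complex.re_ofReal_mul, Complex.exp_ofReal_mul_I_re]

theorem norm_pow_mul_norm_pow_mul_cos_le_re {w x : ℂ} {θ : ℝ} (hw : |w.arg| ≤ θ)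
    (hx : |x.arg| ≤ θ) {a b : ℕ} (hab : (a + b) * θ ≤ Real.pi) :
    ‖w‖ ^ a * ‖x‖ ^ b * Real.cos ((a + b) * θ) ≤ (w ^ a * x ^ b).re := by
  rw [re_pow_mul_pow, ← Real.cos_abs (a * w.arg + b * x.arg)]
  refine mul_le_mul_of_nonneg_left
    (Real.cos_le_cos_of_nonneg_of_le_pi (abs_nonneg _) hab ?_) (by positivity)
  calc |a * w.arg + b * x.arg| ≤ a * |w.arg| + b * |x.arg| := by
        refine (abs_add_le _ _).trans_eq ?_
        rw [abs_mul, abs_mul, Nat.abs_cast, Nat.abs_cast]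
    _ ≤ a * θ + b * θ := by gcongr
    _ = (a + b) * θ := by ring

/-- The truncated sector containing the coordinates of the points of the closed disk of
radius `u_c`. -/
def sector : Set ℂ := {w | |w.arg| ≤ Real.pi / 6 ∧ ‖w‖ ≤ 3 / 2}

section Sector

variable {w x : ℂ}

theorem norm_le_two_mul_re_of_mem_sector (hw : w ∈ sector) : ‖w‖ ≤ 2 * w.re := by
  have h := norm_pow_mul_norm_pow_mul_cos_le_re hw.1 hw.1 (a := 1) (b := 0)
    (by norm_num; linarith [Real.pi_pos])
  norm_num at h
  nlinarith [Real.one_le_sqrt.2 (by norm_num : (1 : ℝ) ≤ 3), norm_nonneg w]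

theorem norm_mul_norm_le_two_mul_re_of_mem_sector (hw : w ∈ sector) (hx : x ∈ sector) :
    ‖w‖ * ‖x‖ ≤ 2 * (w * x).re := by
  have h := norm_pow_mul_norm_pow_mul_cos_le_re hw.1 hx.1 (a := 1) (b := 1)
    (by norm_num; linarith [Real.pi_pos])
  rw [show ((1 : ℕ) + (1 : ℕ) : ℝ) * (Real.pi / 6) = Real.pi / 3 by push_cast; ring,
    Real.cos_pi_div_three] at h
  simp only [pow_one] at h
  linarith

theorem re_pow_mul_pow_nonneg_of_mem_sector (hw : w ∈ sector) (hx : x ∈ sector) {a b : ℕ}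
    (hab : a + b = 3) : 0 ≤ (w ^ a * x ^ b).re := by
  have hangle : (a + b : ℝ) * (Real.pi / 6) = Real.pi / 2 := by
    rw [show (a + b : ℝ) = 3 by exact_mod_cast hab]
    ring
  have h := norm_pow_mul_norm_pow_mul_cos_le_re hw.1 hx.1 (a := a) (b := b)
    (by rw [hangle]; linarith [Real.pi_pos])
  rwa [hangle, Real.cos_pi_div_two, mul_zero] at h

theorem re_sq_mul_sq_ge_of_mem_sector (hw : w ∈ sector) (hx : x ∈ sector) :
    -(1 / 2) * (‖w‖ ^ 2 * ‖x‖ ^ 2) ≤ (w ^ 2 * x ^ 2).re := by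
  have h := norm_pow_mul_norm_pow_mul_cos_le_re hw.1 hx.1 (a := 2) (b := 2)
    (by norm_num; linarith [Real.pi_pos])
  rw [show ((2 : ℕ) + (2 : ℕ) : ℝ) * (Real.pi / 6) = Real.pi - Real.pi / 3 by push_cast; ring,
    Real.cos_pi_sub, Real.cos_pi_div_three] at h
  linarith

theorem norm_add_norm_le_two_mul_norm_Zdenom (hw : w ∈ sector) (hx : x ∈ sector) :
    ‖w‖ + ‖x‖ ≤ 2 * ‖Zdenom w x‖ := by
  have hprod : ‖w‖ * ‖x‖ ≤ 3 := by
    nlinarith [hw.2, hx.2, norm_nonneg w, norm_nonneg x]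
  have hdeg4 : ‖w‖ ^ 2 * ‖x‖ ^ 2 ≤ ‖w‖ * ‖w‖ + ‖w‖ * ‖x‖ + ‖x‖ * ‖x‖ := by
    nlinarith [mul_nonneg (norm_nonneg w) (norm_nonneg x), sq_nonneg (‖w‖ - ‖x‖)]
  have hre : (Zdenom w x).re = w.re + x.re + (w * w).re + (w * x).re + (x * x).re
      + (w ^ 3 * x ^ 0).re + (w ^ 2 * x ^ 1).re + (w ^ 1 * x ^ 2).re + (w ^ 0 * x ^ 3).re
      + (w ^ 2 * x ^ 2).re := by
    simp only [← Complex.add_re, Zdenom]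
    ring_nf
  linarith [Complex.re_le_norm (Zdenom w x), norm_le_two_mul_re_of_mem_sector hw,
    norm_le_two_mul_re_of_mem_sector hx, norm_mul_norm_le_two_mul_re_of_mem_sector hw hw,
    norm_mul_norm_le_two_mul_re_of_mem_sector hw hx,
    norm_mul_norm_le_two_mul_re_of_mem_sector hx hx,
    re_pow_mul_pow_nonneg_of_mem_sector hw hx (a := 3) (b := 0) rfl,
    re_pow_mul_pow_nonneg_of_mem_sector hw hx (a := 2) (b := 1) rfl,
    re_pow_mul_pow_nonneg_of_mem_sector hw hx (a := 1) (b := 2) rfl,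
    re_pow_mul_pow_nonneg_of_mem_sector hw hx (a := 0) (b := 3) rfl,
    re_sq_mul_sq_ge_of_mem_sector hw hx]

theorem Zdenom_ne_zero_of_mem_sector (hw : w ∈ sector) (hx : x ∈ sector) (hx0 : x ≠ 0) :
    Zdenom w x ≠ 0 := fun h => by
  have := norm_add_norm_le_two_mul_norm_Zdenom hw hx
  rw [h, norm_zero] at this
  linarith [norm_pos_iff.2 hx0, norm_nonneg w]

theorem quadratic_ne_zero_of_mem_sector (hw : w ∈ sector) {c₀ c₁ c₂ : ℝ} (hc₀ : 0 < c₀)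
    (hc₁ : 0 ≤ c₁) (hc₂ : 0 ≤ c₂) : c₀ + c₁ * w + c₂ * w ^ 2 ≠ 0 := fun h => by
  have hre := congrArg Complex.re h
  rw [Complex.add_re, Complex.add_re, Complex.re_ofReal_mul, Complex.re_ofReal_mul, sq] at hre
  simp only [Complex.ofReal_re, Complex.zero_re] at hre
  have h1 := norm_le_two_mul_re_of_mem_sector hw
  have h2 := norm_mul_norm_le_two_mul_re_of_mem_sector hw hw
  nlinarith [norm_nonneg w, mul_nonneg (norm_nonneg w) (norm_nonneg w)]

theorem uhatCofactor_ne_zero_of_mem_sector (hw : w ∈ sector) : uhatCofactor w ≠ 0 := fun h => by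
  have hre : (uhatCofactor w).re
      = 3 + 3 * w.re + 3 * (w * w).re + (w ^ 3 * w ^ 0).re := by
    rw [uhatCofactor]
    simp [sq]
  rw [h, Complex.zero_re] at hre
  linarith [norm_le_two_mul_re_of_mem_sector hw, norm_nonneg w,
    norm_mul_norm_le_two_mul_re_of_mem_sector hw hw, mul_nonneg (norm_nonneg w) (norm_nonneg w),
    re_pow_mul_pow_nonneg_of_mem_sector hw hw (a := 3) (b := 0) rfl]

end Sector

/-! ### The coordinate `u ↦ w` and the continuation of `Z` -/

/-- The coordinate in which `Z` is rational: `u = û(1 - coord u)`. -/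
noncomputable def coord (u : ℂ) : ℂ := quarticInv (1 - u / uc)

/-- The slit disk `{u | ‖u - u_c‖ < 3 u_c} \ [u_c, 4 u_c)` on which `coord` is analytic. -/
def coordDomain : Set ℂ := {u | 1 - u / uc ∈ branchDomain}

/-- The continuation of `Z` provided by the rational parametrization. -/
noncomputable def Zext (u v : ℂ) : ℂ := Zparam (coord u) (coord v)

theorem norm_one_sub_div_uc_le (u : ℂ) : ‖1 - u / uc‖ ≤ 1 + ‖u‖ / uc := by
  refine (norm_sub_le _ _).trans_eq ?_
  rw [norm_one, norm_div, Complex.norm_of_nonneg uc_pos.le]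

theorem re_one_sub_div_uc (u : ℂ) : (1 - u / uc).re = 1 - u.re / uc := by
  rw [Complex.sub_re, Complex.div_ofReal_re, Complex.one_re]

theorem mem_coordDomain {u : ℂ} (hu : ‖u‖ < 2 * uc) (hslit : u.im = 0 → u.re < uc) :
    u ∈ coordDomain := by
  refine ⟨?_, ?_⟩
  · by_cases him : u.im = 0
    · left
      rw [re_one_sub_div_uc, sub_pos, div_lt_one uc_pos]
      exact hslit him
    · right
      rw [Complex.sub_im, Complex.div_ofReal_im, Complex.one_im, zero_sub]
      exact neg_ne_zero.2 (div_ne_zero him uc_pos.ne')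
  · rw [mem_ball_zero_iff]
    have : ‖u‖ / uc < 2 := by rwa [div_lt_iff₀ uc_pos]
    linarith [norm_one_sub_div_uc_le u]

theorem ball_subset_coordDomain : ball 0 uc ⊆ coordDomain := fun u hu => by
  rw [mem_ball_zero_iff] at hu
  exact mem_coordDomain (by linarith [norm_nonneg u]) fun _ => (Complex.re_le_norm u).trans_lt hu

theorem one_sub_div_uc_mem_insert {u : ℂ} (hu : u ∈ closedBall 0 uc) :
    1 - u / uc ∈ insert 0 branchDomain := by
  rw [mem_closedBall_zero_iff] at hu
  by_cases h : u = uc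
  · left
    rw [h, div_self ofReal_uc_ne_zero, sub_self]
  · refine .inr (mem_coordDomain (by linarith [uc_pos]) fun him => ?_)
    exact ((Complex.re_le_norm u).trans hu).lt_of_ne fun hre =>
      h (Complex.ext (by simpa using hre) (by simpa using him))

theorem quartic_coord {u : ℂ} (hu : u ∈ closedBall 0 uc) : quartic (coord u) = 1 - u / uc :=
  quartic_quarticInv (one_sub_div_uc_mem_insert hu)

theorem uhat_one_sub_coord {u : ℂ} (hu : 1 - u / uc ∈ insert 0 branchDomain) :
    uhat (1 - coord u) = u := by
  rw [uhat_one_sub_eq_quartic, coord, quartic_quarticInv hu, sub_sub_cancel,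
    mul_div_cancel₀ _ ofReal_uc_ne_zero]

theorem coord_ne_zero {u : ℂ} (hu : u ∈ coordDomain) : coord u ≠ 0 :=
  quarticInv_ne_zero hu

theorem coord_uc : coord uc = 0 := by
  rw [coord, div_self ofReal_uc_ne_zero, sub_self, quarticInv_zero]

theorem coord_mem_sector {u : ℂ} (hu : u ∈ closedBall 0 uc) : coord u ∈ sector := by
  have hmem := one_sub_div_uc_mem_insert hu
  rw [mem_closedBall_zero_iff] at hu
  constructor
  · have harg : |(1 - u / uc).arg| ≤ Real.pi / 2 := by
      rw [Complex.abs_arg_le_pi_div_two_iff, re_one_sub_div_uc, sub_nonneg, div_le_one uc_pos]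
      exact (Complex.re_le_norm u).trans hu
    exact (abs_arg_quarticInv_le hmem).trans (by linarith)
  · have hnorm : ‖u‖ / uc ≤ 1 := (div_le_one uc_pos).2 hu
    refine le_of_pow_le_pow_left₀ three_ne_zero (by norm_num)
      ((norm_quarticInv_pow_three_le hmem).trans ?_)
    linarith [norm_one_sub_div_uc_le u]

theorem coord_zero : coord 0 = 1 := by
  have h0 : (0 : ℂ) ∈ closedBall 0 uc := mem_closedBall_self uc_pos.le
  have hfactor : (coord 0 - 1) * uhatCofactor (coord 0) = 0 := by
    have h := quartic_coord h0
    rw [quartic] at h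
    rw [uhatCofactor]
    linear_combination 3 * h
  exact sub_eq_zero.1 ((mul_eq_zero.1 hfactor).resolve_right
    (uhatCofactor_ne_zero_of_mem_sector (coord_mem_sector h0)))

theorem differentiableAt_coord {u : ℂ} (hu : u ∈ coordDomain) : DifferentiableAt ℂ coord u :=
  (differentiableAt_quarticInv hu).comp u (by fun_prop)

theorem continuousOn_coord : ContinuousOn coord (closedBall 0 uc) :=
  continuousOn_quarticInv.comp (by fun_prop) fun _ => one_sub_div_uc_mem_insert

theorem Zdenom_coord_ne_zero {u v : ℂ} (hu : u ∈ closedBall 0 uc) (hv : v ∈ closedBall 0 uc)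
    (hv' : v ∈ coordDomain) : Zdenom (coord u) (coord v) ≠ 0 :=
  Zdenom_ne_zero_of_mem_sector (coord_mem_sector hu) (coord_mem_sector hv) (coord_ne_zero hv')

theorem Zext_comm (u v : ℂ) : Zext u v = Zext v u :=
  Zparam_comm _ _

theorem differentiableAt_Zext {u v : ℂ} (hv : v ∈ coordDomain)
    (hD : Zdenom (coord u) (coord v) ≠ 0) : DifferentiableAt ℂ (Zext u) v :=
  (differentiableAt_Zparam hD).comp (f := fun v => (coord u, coord v)) v
    ((differentiableAt_const _).prodMk (differentiableAt_coord hv))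

theorem differentiableOn_Zext {u : ℂ} (hu : u ∈ closedBall 0 uc) :
    DifferentiableOn ℂ (Zext u) (ball 0 uc) := fun _ hv =>
  (differentiableAt_Zext (ball_subset_coordDomain hv) (Zdenom_coord_ne_zero hu
    (ball_subset_closedBall hv) (ball_subset_coordDomain hv))).differentiableWithinAt

theorem continuousOn_Zext_left {v : ℂ} (hv : v ∈ ball 0 uc) :
    ContinuousOn (Zext · v) (closedBall 0 uc) := fun u hu =>
  (differentiableAt_Zparam (Zdenom_coord_ne_zero hu (ball_subset_closedBall hv)
    (ball_subset_coordDomain hv))).continuousAt.comp_continuousWithinAt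
    (f := fun u => (coord u, coord v)) ((continuousOn_coord u hu).prodMk continuousWithinAt_const)

/-! ### `Zext` is the sum of the double series -/

theorem eventually_kernelFactor_coord_ne_zero (u : ℂ) :
    ∀ᶠ v in 𝓝[≠] 0, kernelFactor (coord u) (coord v) ≠ 0 := by
  have hball : ball (0 : ℂ) uc ∈ 𝓝 0 := ball_mem_nhds 0 uc_pos
  by_cases h : coord u = 1
  · filter_upwards [nhdsWithin_le_nhds hball, self_mem_nhdsWithin] with v hv hv0 hkernel
    rw [h, kernelFactor] at hkernel
    have hcoord : 1 - coord v = 0 := by linear_combination hkernel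
    refine hv0 ?_
    rw [Set.mem_singleton_iff,
      ← uhat_one_sub_coord (one_sub_div_uc_mem_insert (ball_subset_closedBall hv)), hcoord]
    simp [uhat]
  · refine nhdsWithin_le_nhds (ContinuousAt.eventually_ne ?_ ?_)
    · have hcont : ContinuousAt coord 0 :=
        continuousOn_coord.continuousAt (closedBall_mem_nhds 0 uc_pos)
      unfold kernelFactor
      fun_prop
    · rw [coord_zero, kernelFactor]
      simpa [sub_eq_zero] using Ne.symm h

theorem Zext_zero_right {u : ℂ} (hu : u ∈ closedBall 0 uc) :
    Zext u 0 = Z0hat (1 - coord u) := by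
  rw [Zext, coord_zero,
    Zparam_one_right (uhatCofactor_ne_zero_of_mem_sector (coord_mem_sector hu))]

theorem hasSum_doubleTerm_zero_right {z : ℕ → ℕ → ℝ} {u S : ℂ}
    (h : HasSum (fun p => (z p 0 : ℂ) * u ^ p) S) : HasSum (doubleTerm z u 0) S := by
  have hinj : Function.Injective fun p : ℕ => (p, 0) := fun _ _ h => congrArg Prod.fst h
  refine (hinj.hasSum_iff ?_).1 (h.congr_fun fun p => ?_)
  · rintro ⟨p, _ | q⟩ hpq
    · exact absurd ⟨p, rfl⟩ hpq
    · simp [doubleTerm]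
  · simp [doubleTerm]

section Continuation

variable {ρ : ℝ} {z : ℕ → ℕ → ℝ}

theorem eventually_hasSum_doubleTerm_Zext (hρ : 0 < ρ)
    (hz0 : ∀ H : ℂ, ‖H‖ < ρ → HasSum (fun p : ℕ => (z p 0 : ℂ) * uhat H ^ p) (Z0hat H))
    (hZ : ∀ H K : ℂ, ‖H‖ < ρ → ‖K‖ < ρ → ∃ ZHK : ℂ,
      HasSum (fun pq : ℕ × ℕ => (z pq.1 pq.2 : ℂ) * uhat H ^ pq.1 * uhat K ^ pq.2) ZHK ∧
      ((nuc : ℂ) * uhat K * uhat H - uhat H ^ 2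
          - ((nuc : ℂ) ^ 2 - 1) * (tc : ℂ) * uhat K * (Z0hat H + uhat H * Z1hat K))
          * (ZHK - Z0hat K)
        = uhat H ^ 2 * (Z0hat K - Z0hat H)
          + ((nuc : ℂ) ^ 2 - 1) * uhat H * uhat K
            * (uhat H ^ 2 - (tc : ℂ) * Z0hat H * Z1hat K)) :
    ∀ᶠ u in 𝓝 0, ∀ᶠ v in 𝓝 0, HasSum (doubleTerm z u v) (Zext u v) := by
  have hcont : ContinuousAt coord 0 :=
    continuousOn_coord.continuousAt (closedBall_mem_nhds 0 uc_pos)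
  have hsmall : ∀ᶠ u in 𝓝 (0 : ℂ), ‖1 - coord u‖ < ρ :=
    (hcont.const_sub 1).norm.eventually_lt_const (by simpa [coord_zero] using hρ)
  have hball : ∀ᶠ u in 𝓝 (0 : ℂ), u ∈ ball 0 uc := ball_mem_nhds 0 uc_pos
  filter_upwards [hsmall, hball] with u hu_small hu_ball
  have hu := ball_subset_closedBall hu_ball
  have huhat := uhat_one_sub_coord (one_sub_div_uc_mem_insert hu)
  have hzero : HasSum (doubleTerm z u 0) (Zext u 0) := by
    rw [Zext_zero_right hu]
    refine hasSum_doubleTerm_zero_right ?_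
    simpa only [huhat] using hz0 _ hu_small
  have hpunctured : ∀ᶠ v in 𝓝[≠] 0, HasSum (doubleTerm z u v) (Zext u v) := by
    filter_upwards [nhdsWithin_le_nhds hsmall, nhdsWithin_le_nhds hball,
      eventually_kernelFactor_coord_ne_zero u] with v hv_small hv_ball hkernel
    have hv := ball_subset_closedBall hv_ball
    obtain ⟨Z, hsum, hequation⟩ := hZ _ _ hu_small hv_small
    rw [huhat, uhat_one_sub_coord (one_sub_div_uc_mem_insert hv)] at hsum
    rwa [eq_Zparam_of_functional_equation
      (uhatCofactor_ne_zero_of_mem_sector (coord_mem_sector hu))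
      (uhatCofactor_ne_zero_of_mem_sector (coord_mem_sector hv))
      (Zdenom_coord_ne_zero hu hv (ball_subset_coordDomain hv_ball)) hkernel hequation] at hsum
  filter_upwards [eventually_nhdsWithin_iff.1 hpunctured] with v hv
  by_cases h : v = 0
  · rwa [h]
  · exact hv h

theorem hasSum_doubleTerm_Zext (hz : ∀ p q, 0 ≤ z p q)
    (hloc : ∀ᶠ u in 𝓝 0, ∀ᶠ v in 𝓝 0, HasSum (doubleTerm z u v) (Zext u v))
    {u v : ℂ} (hu : u ∈ closedBall 0 uc) (hv : v ∈ ball 0 uc) :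
    HasSum (doubleTerm z u v) (Zext u v) := by
  refine hasSum_doubleTerm_of_continuousOn hz uc_pos (fun v hv => continuousOn_Zext_left hv)
    (fun u hu v hv => hasSum_doubleTerm_of_differentiableOn hz uc_pos
      (fun u hu => differentiableOn_Zext (ball_subset_closedBall hu)) (fun v hv => ?_) hloc hu hv)
    hu hv
  simp only [Zext_comm _ v]
  exact differentiableOn_Zext (ball_subset_closedBall hv)

end Continuation

/-! ### The singularity at `u_c` -/

theorem X_pow_dvd_of_isBigO {𝕜 : Type*} [NormedField 𝕜] {l : Filter 𝕜} [l.NeBot]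
    (hl : l ≤ 𝓝[≠] 0) {p : Polynomial 𝕜} {n : ℕ}
    (h : (fun x => p.eval x) =O[l] fun x => x ^ n) : Polynomial.X ^ n ∣ p := by
  induction n generalizing p with
  | zero => simp
  | succ n ih =>
    have hl0 : Tendsto id l (𝓝 0) := hl.trans nhdsWithin_le_nhds
    have hroot : p.eval 0 = 0 := tendsto_nhds_unique ((p.continuous.tendsto 0).comp hl0)
      (h.trans_tendsto (by simpa using hl0.pow (n + 1)))
    obtain ⟨q, rfl⟩ := Polynomial.X_dvd_iff.2 ((Polynomial.coeff_zero_eq_eval_zero p).trans hroot)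
    rw [pow_succ']
    refine mul_dvd_mul_left _ (ih ?_)
    refine (isBigO_refl (fun x : 𝕜 => x⁻¹) l).mul h |>.congr' ?_ ?_ <;>
    · filter_upwards [hl self_mem_nhdsWithin] with x hx
      have hx0 : x ≠ 0 := hx
      simp only [Polynomial.eval_mul, Polynomial.eval_X, pow_succ']
      field_simp

theorem exists_isBigO_sub_linear_of_analyticAt {𝕜 : Type*} [NontriviallyNormedField 𝕜] {g : 𝕜 → 𝕜}
    {a : 𝕜} (hg : AnalyticAt 𝕜 g a) :
    ∃ c₀ c₁ : 𝕜, (fun v => g v - (c₀ + c₁ * (v - a))) =O[𝓝 a] fun v => (v - a) ^ 2 := by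
  obtain ⟨p, hp⟩ := hg
  refine ⟨p.coeff 0, p.coeff 1, ?_⟩
  have hsub : Tendsto (fun v => v - a) (𝓝 a) (𝓝 0) :=
    Continuous.tendsto' (by fun_prop) _ _ (sub_self a)
  refine (((hp.isBigO_sub_partialSum_pow 2).comp_tendsto hsub).congr (fun v => ?_)
    fun v => rfl).trans (isBigO_of_le _ fun v => by simp)
  simp [FormalMultilinearSeries.partialSum, Finset.sum_range_succ, mul_comm]

theorem eq_zero_of_add_mul_quartic_isBigO {l : Filter ℂ} [l.NeBot] (hl : l ≤ 𝓝[≠] 0)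
    {α β κ : ℂ} (h : (fun x => α + β * quartic x + κ * x ^ 4) =O[l] fun x => x ^ 5) : κ = 0 := by
  set p : Polynomial ℂ := .C α + .C (2 / 3 * β) * .X ^ 3 + .C (β / 3 + κ) * .X ^ 4 with hp
  have hdvd : Polynomial.X ^ 5 ∣ p := by
    refine X_pow_dvd_of_isBigO hl (h.congr_left fun x => ?_)
    simp only [hp, quartic, Polynomial.eval_add, Polynomial.eval_mul, Polynomial.eval_C,
      Polynomial.eval_pow, Polynomial.eval_X]
    ring
  rw [Polynomial.X_pow_dvd_iff] at hdvd
  have h3 : 2 / 3 * β = 0 := by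
    simpa [hp, -map_mul, -map_add, Polynomial.coeff_C] using hdvd 3 (by norm_num)
  have h4 : β / 3 + κ = 0 := by
    simpa [hp, -map_mul, -map_add, Polynomial.coeff_C] using hdvd 4 (by norm_num)
  linear_combination h4 - h3 / 2

/-- The coefficient of `x ^ 4` in the expansion of `Zparam w x` at `x = 0`, once a constant
multiple of `quartic x` has been subtracted. -/
noncomputable def singularCoeff (w : ℂ) : ℂ :=
  3 * (4 + 2 * w + 3 * w ^ 2) / (20 * (1 + w + w ^ 2) ^ 2)

theorem one_add_add_sq_ne_zero_of_mem_sector {w : ℂ} (hw : w ∈ sector) : 1 + w + w ^ 2 ≠ 0 := by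
  simpa using quadratic_ne_zero_of_mem_sector hw (c₀ := 1) (c₁ := 1) (c₂ := 1)
    one_pos zero_le_one zero_le_one

theorem singularCoeff_ne_zero {w : ℂ} (hw : w ∈ sector) : singularCoeff w ≠ 0 := by
  have hnum : 4 + 2 * w + 3 * w ^ 2 ≠ 0 := by
    simpa using quadratic_ne_zero_of_mem_sector hw (c₀ := 4) (c₁ := 2) (c₂ := 3)
      (by norm_num) (by norm_num) (by norm_num)
  exact div_ne_zero (mul_ne_zero three_ne_zero hnum)
    (mul_ne_zero (by norm_num) (pow_ne_zero 2 (one_add_add_sq_ne_zero_of_mem_sector hw)))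

/-- The remainder, divided by `x ^ 5`, of the expansion of `Zparam w x` at `x = 0`. -/
noncomputable def Zremainder (w x : ℂ) : ℂ :=
  (3 + x) / 10 + uhatCofactor w * (1 - w) / (10 * (1 + w + w ^ 2) ^ 2)
    * (3 * (1 + w + w ^ 2) * (w / Zdenom w x) + (2 + w ^ 2) * w * (x / Zdenom w x)
      - (1 - w) * x * (x / Zdenom w x))

theorem exists_Zparam_eq_add_Zremainder {w : ℂ} (hq : 1 + w + w ^ 2 ≠ 0) : ∃ α β : ℂ,
    ∀ x, Zdenom w x ≠ 0 → Zparam w x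
      = α + β * quartic x + singularCoeff w * x ^ 4 + x ^ 5 * Zremainder w x := by
  refine ⟨Z0hat (1 - w) + (6 + 3 * Real.sqrt 7) / 10
      - 3 * uhatCofactor w / (10 * (1 + w + w ^ 2)),
    -3 / 20 * (1 + 2 * Real.sqrt 7
      + uhatCofactor w * (1 - w) * (1 + 2 * w) / (1 + w + w ^ 2) ^ 2), fun x hD => ?_⟩
  rw [Zparam, Z0hat_one_sub x, singularCoeff, Zremainder]
  field_simp
  simp only [quartic, uhatCofactor, Zdenom]
  ring

theorem div_Zdenom_isBigO_one {w : ℂ} (hw : w ∈ sector) :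
    (fun x => w / Zdenom w x) =O[𝓝[sector \ {0}] 0] (fun _ => (1 : ℂ)) ∧
      (fun x => x / Zdenom w x) =O[𝓝[sector \ {0}] 0] fun _ => (1 : ℂ) := by
  constructor <;>
  · refine .of_bound 2 ?_
    filter_upwards [self_mem_nhdsWithin] with x hx
    have hD := norm_pos_iff.2 (Zdenom_ne_zero_of_mem_sector hw hx.1 hx.2)
    rw [norm_div, norm_one, mul_one, div_le_iff₀ hD]
    linarith [norm_add_norm_le_two_mul_norm_Zdenom hw hx.1, norm_nonneg w, norm_nonneg x]

theorem Zremainder_isBigO_one {w : ℂ} (hw : w ∈ sector) :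
    Zremainder w =O[𝓝[sector \ {0}] 0] fun _ => (1 : ℂ) := by
  have hcont {f : ℂ → ℂ} (hf : Continuous f) :
      f =O[𝓝[sector \ {0}] 0] fun _ => (1 : ℂ) :=
    (hf.continuousAt.tendsto.mono_left nhdsWithin_le_nhds).isBigO_one ℂ
  obtain ⟨hwD, hxD⟩ := div_Zdenom_isBigO_one hw
  refine (hcont (by fun_prop)).add (.const_mul_left (((hwD.const_mul_left _).add
    (hxD.const_mul_left _)).sub ?_) _)
  simpa only [one_mul] using (hcont (f := fun x => (1 - w) * x) (by fun_prop)).mul hxD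

theorem exists_Zparam_sub_isBigO {w : ℂ} (hw : w ∈ sector) : ∃ α β : ℂ,
    (fun x => Zparam w x - (α + β * quartic x + singularCoeff w * x ^ 4))
      =O[𝓝[sector \ {0}] 0] fun x => x ^ 5 := by
  obtain ⟨α, β, h⟩ := exists_Zparam_eq_add_Zremainder (one_add_add_sq_ne_zero_of_mem_sector hw)
  refine ⟨α, β, ((isBigO_refl (fun x : ℂ => x ^ 5) _).mul (Zremainder_isBigO_one hw)).congr' ?_
    (.of_forall fun x => mul_one _)⟩
  filter_upwards [self_mem_nhdsWithin] with x hx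
  rw [h x (Zdenom_ne_zero_of_mem_sector hw hx.1 hx.2), add_sub_cancel_left]

theorem quartic_sq_isBigO : (fun x => quartic x ^ 2) =O[𝓝 0] fun x => x ^ 5 := by
  have hcont : Continuous fun x : ℂ => x * (2 + x) ^ 2 / 9 := by fun_prop
  refine ((isBigO_refl (fun x : ℂ => x ^ 5) _).mul
    ((hcont.tendsto 0).isBigO_one ℂ)).congr (fun x => ?_) fun x => mul_one _
  rw [quartic]
  ring

theorem tendsto_coord_nhdsWithin_uc :
    Tendsto coord (𝓝[ball 0 uc] uc) (𝓝[sector \ {0}] 0) := by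
  have huc : (uc : ℂ) ∈ closedBall 0 uc := by simp [abs_of_pos uc_pos]
  refine tendsto_nhdsWithin_iff.2 ⟨?_, ?_⟩
  · have hlim := (continuousOn_coord _ huc).mono ball_subset_closedBall
    rwa [ContinuousWithinAt, coord_uc] at hlim
  · filter_upwards [self_mem_nhdsWithin] with v hv
    exact ⟨coord_mem_sector (ball_subset_closedBall hv),
      coord_ne_zero (ball_subset_coordDomain hv)⟩

theorem sub_uc_eq {v : ℂ} (hv : v ∈ closedBall 0 uc) : v - uc = -uc * quartic (coord v) := by
  have := ofReal_uc_ne_zero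
  rw [quartic_coord hv]
  field_simp
  ring

theorem not_analyticAt_of_eq_Zext {u : ℂ} (hu : u ∈ closedBall 0 uc) {g : ℂ → ℂ}
    (h : g =ᶠ[𝓝[ball 0 uc] (uc : ℂ)] Zext u) : ¬ AnalyticAt ℂ g uc := fun hg => by
  have huc : (uc : ℂ) ∈ closure (ball 0 uc) := by
    rw [closure_ball 0 uc_pos.ne']
    simp [abs_of_pos uc_pos]
  have : (𝓝[ball 0 uc] (uc : ℂ)).NeBot := mem_closure_iff_nhdsWithin_neBot.1 huc
  obtain ⟨c₀, c₁, hlinear⟩ := exists_isBigO_sub_linear_of_analyticAt hg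
  obtain ⟨α, β, hsingular⟩ := exists_Zparam_sub_isBigO (coord_mem_sector hu)
  have hball : ∀ᶠ v in 𝓝[ball 0 uc] (uc : ℂ), v ∈ closedBall 0 uc :=
    mem_of_superset self_mem_nhdsWithin ball_subset_closedBall
  have hsquare : (fun v => (v - uc) ^ 2) =O[𝓝[ball 0 uc] (uc : ℂ)] fun v => coord v ^ 5 := by
    have hquartic := quartic_sq_isBigO.comp_tendsto
      (tendsto_coord_nhdsWithin_uc.mono_right nhdsWithin_le_nhds)
    refine (hquartic.const_mul_left ((uc : ℂ) ^ 2)).congr' ?_ .rfl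
    filter_upwards [hball] with v hv
    rw [sub_uc_eq hv, Function.comp_apply]
    ring
  have hdiff := (hlinear.mono nhdsWithin_le_nhds).trans hsquare |>.sub
    (hsingular.comp_tendsto tendsto_coord_nhdsWithin_uc)
  refine singularCoeff_ne_zero (coord_mem_sector hu) (eq_zero_of_add_mul_quartic_isBigO
    (l := map coord (𝓝[ball 0 uc] (uc : ℂ))) (α := α - c₀) (β := β + c₁ * uc)
    (tendsto_coord_nhdsWithin_uc.trans (nhdsWithin_mono 0 fun x hx => hx.2))
    (isBigO_map.2 (hdiff.congr' ?_ .rfl)))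
  filter_upwards [h, hball] with v hgv hv
  rw [hgv, sub_uc_eq hv]
  simp only [Function.comp_apply, Zext]
  ring

/-! ### Continuation to a slit disk -/

theorem isOpen_slitDisk (x ε : ℝ) : IsOpen (slitDisk x ε) :=
  isOpen_ball.sdiff (isCompact_Icc.image Complex.continuous_ofReal).isClosed

theorem finite_setOf_Zdenom_eq_zero (w : ℂ) : {x : ℂ | Zdenom w x = 0}.Finite := by
  set p : Cubic ℂ := ⟨1, 1 + w + w ^ 2, 1 + w + w ^ 2, w + w ^ 2 + w ^ 3⟩ with hp
  have hp0 : p.toPoly ≠ 0 := Cubic.ne_zero_of_a_ne_zero one_ne_zero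
  refine (Polynomial.finite_setOfPred_isRoot hp0).subset fun x hx => ?_
  rw [Set.mem_ofPred_eq, Zdenom] at hx
  simp only [Set.mem_ofPred_eq, Polynomial.IsRoot, hp, Cubic.toPoly, Polynomial.eval_add,
    Polynomial.eval_mul, Polynomial.eval_pow, Polynomial.eval_C, Polynomial.eval_X]
  linear_combination hx

theorem eventually_forall_mem_lt_of_finite {s : Set ℝ} (hs : s.Finite) :
    ∀ᶠ ε in 𝓝 (0 : ℝ), ∀ y ∈ s, 0 < y → ε < y :=
  (eventually_all_finite hs).2 fun _ _ =>
    eventually_imp_distrib_left.2 eventually_lt_nhds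

theorem exists_margin_Zdenom_coord_ne_zero (u : ℂ) : ∃ ε > 0, ∀ v ∈ coordDomain,
    uc < ‖v‖ → ‖v‖ < uc + ε → Zdenom (coord u) (coord v) ≠ 0 := by
  have hfinite : ((fun x => ‖uhat (1 - x)‖ - uc) '' {x | Zdenom (coord u) x = 0}).Finite :=
    (finite_setOf_Zdenom_eq_zero _).image _
  obtain ⟨ε, hε, hpos⟩ := ((eventually_forall_mem_lt_of_finite hfinite).filter_mono
    nhdsWithin_le_nhds |>.and self_mem_nhdsWithin).exists (f := 𝓝[>] 0)
  refine ⟨ε, hpos, fun v hv hlt hltε hD => ?_⟩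
  have := hε _ ⟨coord v, hD, rfl⟩
  simp only [uhat_one_sub_coord (Set.mem_insert_of_mem 0 hv)] at this
  linarith [this (by linarith)]

theorem mem_coordDomain_of_mem_slitDisk {ε : ℝ} (hε : ε ≤ uc) {v : ℂ} (hv : v ∈ slitDisk uc ε) :
    v ∈ coordDomain := by
  have hball := mem_ball_zero_iff.1 hv.1
  refine mem_coordDomain (by linarith) fun him => ?_
  by_contra! hre
  exact hv.2 ⟨v.re, ⟨hre, (Complex.re_le_norm v).trans hball.le⟩,
    Complex.ext (by simp) (by simp [him])⟩

theorem exists_analyticAt_Zext_slitDisk {u : ℂ} (hu : u ∈ closedBall 0 uc) :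
    ∃ ε : ℝ, 0 < ε ∧ ∀ v ∈ slitDisk uc ε, AnalyticAt ℂ (Zext u) v := by
  obtain ⟨ε, hε, hne⟩ := exists_margin_Zdenom_coord_ne_zero u
  refine ⟨min ε uc, lt_min hε uc_pos, fun v hv => ?_⟩
  rw [Complex.analyticAt_iff_eventually_differentiableAt]
  filter_upwards [(isOpen_slitDisk uc (min ε uc)).mem_nhds hv] with y hy
  have hmem := mem_coordDomain_of_mem_slitDisk (min_le_right ε uc) hy
  refine differentiableAt_Zext hmem ?_
  rcases le_or_gt ‖y‖ uc with h | h
  · exact Zdenom_coord_ne_zero hu (mem_closedBall_zero_iff.2 h) hmem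
  · have hball := mem_ball_zero_iff.1 hy.1
    exact hne y hmem h (by linarith [min_le_left ε uc])

/-- for each `|u| ≤ u_c`, the power series `Z_u(v) = Σ_q (Σ_p z_{p,q} u^p) v^q`
has radius of convergence exactly `u_c`, admits no analytic continuation to any
neighborhood of `u_c`, and admits an analytic continuation to a slit disk at `u_c`. -/
theorem statement5
    (ρ : ℝ) (hρ : 0 < ρ)
    (z : ℕ → ℕ → ℝ) (hz_nonneg : ∀ p q, 0 ≤ z p q)
    -- `z p 0` are the Taylor coefficients of `Z₀ = Ẑ₀ ∘ û⁻¹` at `0`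
    (hz0 : ∀ H : ℂ, ‖H‖ < ρ →
      HasSum (fun p : ℕ => (z p 0 : ℂ) * uhat H ^ p) (Z0hat H))
    -- `z p q` are the Taylor coefficients at `(0,0)` of the solution `Z(u,v)` of the
    -- algebraic equation, expressed through the parametrization `u = û(H)`, `v = û(K)`
    (hZ : ∀ H K : ℂ, ‖H‖ < ρ → ‖K‖ < ρ → ∃ ZHK : ℂ,
      HasSum (fun pq : ℕ × ℕ => (z pq.1 pq.2 : ℂ) * uhat H ^ pq.1 * uhat K ^ pq.2) ZHK ∧
      ((nuc : ℂ) * uhat K * uhat H - uhat H ^ 2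
          - ((nuc : ℂ) ^ 2 - 1) * (tc : ℂ) * uhat K * (Z0hat H + uhat H * Z1hat K))
          * (ZHK - Z0hat K)
        = uhat H ^ 2 * (Z0hat K - Z0hat H)
          + ((nuc : ℂ) ^ 2 - 1) * uhat H * uhat K * (uhat H ^ 2 - (tc : ℂ) * Z0hat H * Z1hat K))
    :
    ∀ u : ℂ, ‖u‖ ≤ uc →
      (∀ v : ℂ, ‖v‖ < uc →
        Summable (fun q : ℕ => (∑' p : ℕ, (z p q : ℂ) * u ^ p) * v ^ q)) ∧
      (∀ v : ℂ, uc < ‖v‖ →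
        ¬ Summable (fun q : ℕ => (∑' p : ℕ, (z p q : ℂ) * u ^ p) * v ^ q)) ∧
      (¬ ∃ (g : ℂ → ℂ) (ε : ℝ), 0 < ε ∧
          (∀ w ∈ Metric.ball ((uc : ℝ) : ℂ) ε, AnalyticAt ℂ g w) ∧
          ∀ v : ℂ, ‖v‖ < uc → v ∈ Metric.ball ((uc : ℝ) : ℂ) ε →
            g v = ∑' q : ℕ, (∑' p : ℕ, (z p q : ℂ) * u ^ p) * v ^ q) ∧
      (∃ (g : ℂ → ℂ) (ε : ℝ), 0 < ε ∧
          (∀ w ∈ slitDisk uc ε, AnalyticAt ℂ g w) ∧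
          ∀ v : ℂ, ‖v‖ < uc →
            g v = ∑' q : ℕ, (∑' p : ℕ, (z p q : ℂ) * u ^ p) * v ^ q) := by
  have hloc := eventually_hasSum_doubleTerm_Zext hρ hz0 hZ
  intro u hu
  rw [← mem_closedBall_zero_iff] at hu
  have hsum : ∀ v : ℂ, ‖v‖ < uc →
      HasSum (fun q : ℕ => (∑' p : ℕ, (z p q : ℂ) * u ^ p) * v ^ q) (Zext u v) := fun v hv =>
    hasSum_tsum_mul_pow_of_hasSum_doubleTerm
      (hasSum_doubleTerm_Zext hz_nonneg hloc hu (mem_ball_zero_iff.2 hv))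
  refine ⟨fun v hv => (hsum v hv).summable, fun v hv hsummable => ?_, ?_, ?_⟩
  · have huc : ‖(uc : ℂ)‖ < ‖v‖ := by rwa [Complex.norm_of_nonneg uc_pos.le]
    refine not_analyticAt_of_eq_Zext hu ?_ (analyticAt_tsum_of_summable hsummable huc)
    filter_upwards [self_mem_nhdsWithin] with y hy
    exact (hsum y (mem_ball_zero_iff.1 hy)).tsum_eq
  · rintro ⟨g, ε, hε, hg, heq⟩
    refine not_analyticAt_of_eq_Zext hu ?_ (hg _ (mem_ball_self hε))
    filter_upwards [self_mem_nhdsWithin, nhdsWithin_le_nhds (ball_mem_nhds _ hε)] with y hy hyε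
    have hy' := mem_ball_zero_iff.1 hy
    exact (heq y hy' hyε).trans (hsum y hy').tsum_eq
  · obtain ⟨ε, hε, han⟩ := exists_analyticAt_Zext_slitDisk hu
    exact ⟨Zext u, ε, hε, han, fun v hv => (hsum v hv).tsum_eq.symm⟩
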